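/- Let k ≥ 1, let U ∈ M_k(ℂ) vary through the powers of the shift-type unitary with U^k = z·I (i.e., work in π_k(C(T)) ⊂ M_k(C(T))), and let A ∈ M_k(ℂ) be positive with Tr(A) = 1. Then the map F_A := π_k⁻¹ ∘ F̃_A ∘ π_k, where F̃_A(x) = Tr(Ax)·I for x ∈ π_k(C(T)), is a conditional expectation from C(T) onto the C*-subalgebra B_k generated by the powers of z^k. -/

import Mathlib

open scoped ComplexOrder
/-- The character `z ↦ z^n` on the unit circle, as a continuous function. -/
noncomputable def circleChar (n : ℤ) : C(Circle, ℂ) :=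
  ⟨fun z => ((z ^ n : Circle) : ℂ), continuous_subtype_val.comp (continuous_zpow n)⟩

/-- The shift-type matrix `U_k ∈ M_k(C(𝕋))`. -/
noncomputable def shiftUnitary (k : ℕ) : Matrix (Fin k) (Fin k) C(Circle, ℂ) :=
  fun i j =>
    if (i : ℕ) = 0 ∧ (j : ℕ) = k - 1 then ⟨fun z => (z : ℂ), continuous_subtype_val⟩
    else if (i : ℕ) = (j : ℕ) + 1 then 1 else 0

/-- `E` is a conditional expectation of `C(𝕋)` onto the C*-subalgebra `B`: a positive,
unital, idempotent, contractive linear `B`-bimodule projection onto `B`. -/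
def IsCondExp (B : StarSubalgebra ℂ C(Circle, ℂ)) (E : C(Circle, ℂ) → C(Circle, ℂ)) : Prop :=
  IsLinearMap ℂ E ∧ (∀ g, E g ∈ B) ∧ (∀ b ∈ B, E b = b) ∧
    (∀ g, ∃ h : C(Circle, ℂ), E (star g * g) = star h * h) ∧
    (∀ b₁ ∈ B, ∀ b₂ ∈ B, ∀ a, E (b₁ * a * b₂) = b₁ * E a * b₂) ∧
    (∀ g, ‖E g‖ ≤ ‖g‖)

/-!
Put `σ f = f(z ^ k)`, a *-isomorphism of `C(𝕋)` onto `B_k`. Since `U_k ^ k = z · I`, the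
homomorphisms `π ∘ σ` and `f ↦ f · I` agree on the generator `z`, hence everywhere, so that
`π⁻¹(f · I) = σ f` and `F_A = σ ∘ T` with `T g = Tr(A π(g))`. The map `T` is positive and unital,
hence contractive, and `T (σ f * g) = Tr(A (f · π(g))) = f * T g`. These properties make
`σ ∘ T` a conditional expectation onto the range of `σ`. The same argument works for `σ f = f ∘ φ`
with any continuous `φ : 𝕋 → 𝕋` such that `π(φ) = z · I`.
-/

section CStarAlgebra

variable {A B : Type*} [CStarAlgebra A] [CStarAlgebra B]

theorem norm_apply_le_norm_apply_one_mul [PartialOrder A] [StarOrderedRing A]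
    (f : A →ₚ[ℂ] ℂ) (a : A) : ‖f a‖ ≤ ‖f 1‖ * ‖a‖ := by
  have norm_sq_toPreGNS (b : A) : ‖f.toPreGNS b‖ ^ 2 = ‖f (star b * b)‖ := by
    simpa using congrArg norm (f.preGNS_norm_sq (f.toPreGNS b))
  have apply_eq_inner : f a = inner ℂ (f.toPreGNS 1) (f.toPreGNS a) := by
    simp [f.preGNS_inner_def]
  refine le_of_sq_le_sq ?_ (by positivity)
  calc ‖f a‖ ^ 2 ≤ (‖f.toPreGNS 1‖ * ‖f.toPreGNS a‖) ^ 2 := by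
        rw [apply_eq_inner]
        gcongr
        exact norm_inner_le_norm _ _
    _ = ‖f 1‖ * ‖f (star a * a)‖ := by
        rw [mul_pow, norm_sq_toPreGNS, norm_sq_toPreGNS, star_one, one_mul]
    _ ≤ ‖f 1‖ * (‖f 1‖ * ‖star a * a‖) := by
        gcongr
        exact f.norm_apply_le_of_nonneg _ (star_mul_self_nonneg a)
    _ = (‖f 1‖ * ‖a‖) ^ 2 := by rw [CStarRing.norm_star_mul_self]; ring

theorem norm_apply_le_norm_of_map_one [PartialOrder A] [StarOrderedRing A] {Y : Type*}
    [TopologicalSpace Y] [CompactSpace Y] (T : A →ₚ[ℂ] C(Y, ℂ)) (hT : T 1 = 1) (a : A) :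
    ‖T a‖ ≤ ‖a‖ := by
  refine (ContinuousMap.norm_le _ (norm_nonneg a)).mpr fun y => ?_
  let state : A →ₚ[ℂ] ℂ :=
    .mk₀ ((ContinuousMap.evalStarAlgHom ℂ ℂ y).toLinearMap ∘ₗ T.toLinearMap)
      fun _ hx => T.map_nonneg hx y
  have state_one : state 1 = 1 := congrArg (· y) hT
  calc ‖state a‖ ≤ ‖state 1‖ * ‖a‖ := norm_apply_le_norm_apply_one_mul state a
    _ = ‖a‖ := by rw [state_one, norm_one, one_mul]

open scoped CStarAlgebra in
theorem starAlgHom_ext_of_elemental_eq_top {a : A} (ha : StarAlgebra.elemental ℂ a = ⊤)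
    {φ ψ : A →⋆ₐ[ℂ] B} (h : φ a = ψ a) : φ = ψ := by
  have hle : StarAlgebra.elemental ℂ a ≤ StarAlgHom.equalizer φ ψ :=
    StarAlgebra.elemental.le_of_mem (isClosed_eq (map_continuous φ) (map_continuous ψ)) h
  exact StarAlgHom.ext fun x => hle (ha ▸ StarSubalgebra.mem_top)

theorem starAlgHom_matrix_ext_of_elemental_eq_top [PartialOrder B] [StarOrderedRing B]
    {n : Type*} [Fintype n] [DecidableEq n] {a : A} (ha : StarAlgebra.elemental ℂ a = ⊤)
    {φ ψ : A →⋆ₐ[ℂ] Matrix n n B} (h : φ a = ψ a) : φ = ψ := by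
  let e : Matrix n n B ≃⋆ₐ[ℂ] CStarMatrix n n B := CStarMatrix.ofMatrixStarAlgEquiv
  let toCStarMatrix : Matrix n n B →⋆ₐ[ℂ] CStarMatrix n n B := e
  have comp_eq : toCStarMatrix.comp φ = toCStarMatrix.comp ψ :=
    starAlgHom_ext_of_elemental_eq_top ha (congrArg e h)
  exact StarAlgHom.ext fun x => e.injective (DFunLike.congr_fun comp_eq x)

open scoped CStarAlgebra in
theorem range_eq_elemental_of_injective {a : A} (ha : StarAlgebra.elemental ℂ a = ⊤)
    (σ : A →⋆ₐ[ℂ] B) (hσ : Function.Injective σ) :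
    σ.range = StarAlgebra.elemental ℂ (σ a) := by
  rw [StarAlgHom.range_eq_map_top, ← ha, StarAlgebra.elemental, StarAlgebra.elemental,
    ← StarSubalgebra.topologicalClosure_map _ _
      (NonUnitalStarAlgHom.isometry σ hσ).isClosedEmbedding.isClosedMap (map_continuous σ),
    StarAlgHom.map_adjoin, Set.image_singleton]

end CStarAlgebra

section WeightedTrace

variable {n : Type*} [Fintype n]

/-- The functional `M ↦ Tr(A M)` on matrices over an `S`-algebra `R`, for a weight `A` with
entries in `S`. -/
def weightedTrace {S R : Type*} [CommSemiring S] [CommSemiring R] [Algebra S R]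
    (A : Matrix n n S) : Matrix n n R →ₗ[S] R :=
  Matrix.traceLinearMap n S R ∘ₗ LinearMap.mulLeft S (A.map (algebraMap S R))

section CommSemiring

variable {S R : Type*} [CommSemiring S] [CommSemiring R] [Algebra S R]

theorem weightedTrace_apply (A : Matrix n n S) (M : Matrix n n R) :
    weightedTrace A M = ∑ i, ∑ j, A i j • M j i := by
  simp [weightedTrace, Matrix.trace, Matrix.mul_apply, Algebra.smul_def]

theorem weightedTrace_one [DecidableEq n] (A : Matrix n n S) :
    weightedTrace A (1 : Matrix n n R) = algebraMap S R A.trace := by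
  simp [weightedTrace, Matrix.trace]

theorem weightedTrace_scalar_mul [DecidableEq n] (A : Matrix n n S) (f : R) (M : Matrix n n R) :
    weightedTrace A (Matrix.scalar n f * M) = f * weightedTrace A M := by
  simp [weightedTrace, ← Matrix.smul_eq_diagonal_mul]

end CommSemiring

section StarOrderedRing

variable {R : Type*} [CommRing R] [StarRing R] [Algebra ℂ R] [StarModule ℂ R]
  [PartialOrder R] [StarOrderedRing R] {A : Matrix n n ℂ}

open scoped MatrixOrder Matrix.Norms.L2Operator in
theorem weightedTrace_conjTranspose_mul_self_nonneg {m : Type*} [Fintype m]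
    (hA : A.PosSemidef) (M : Matrix m n R) : 0 ≤ weightedTrace A (M.conjTranspose * M) := by
  classical
  obtain ⟨B, rfl⟩ := CStarAlgebra.nonneg_iff_eq_star_mul_self.mp hA.nonneg
  let B' : Matrix n n R := B.map (algebraMap ℂ R)
  have map_star_mul_self : (star B * B).map (algebraMap ℂ R) = B'.conjTranspose * B' := by
    rw [Matrix.map_mul, Matrix.star_eq_conjTranspose,
      Matrix.conjTranspose_map _ fun c => algebraMap_star_comm c]
  calc (0 : R) ≤ ((M * B'.conjTranspose).conjTranspose * (M * B'.conjTranspose)).trace :=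
        (Matrix.posSemidef_conjTranspose_mul_self _).trace_nonneg
    _ = weightedTrace (star B * B) (M.conjTranspose * M) := by
        simp only [weightedTrace, LinearMap.comp_apply, LinearMap.mulLeft_apply,
          Matrix.traceLinearMap_apply, map_star_mul_self, Matrix.conjTranspose_mul,
          Matrix.conjTranspose_conjTranspose]
        rw [← Matrix.mul_assoc, Matrix.trace_mul_comm]
        simp only [Matrix.mul_assoc]

/-- The positive map `x ↦ Tr(A π(x))` attached to a positive semidefinite weight `A` and a matrix
representation `π`. -/
noncomputable def weightedTraceComp [DecidableEq n] {B : Type*} [CStarAlgebra B] [PartialOrder B]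
    [StarOrderedRing B] (hA : A.PosSemidef) (π : B →⋆ₐ[ℂ] Matrix n n R) : B →ₚ[ℂ] R :=
  .mk₀ (weightedTrace A ∘ₗ π.toLinearMap) fun x hx => by
    obtain ⟨y, rfl⟩ := CStarAlgebra.nonneg_iff_eq_star_mul_self.mp hx
    change 0 ≤ weightedTrace A (π (star y * y))
    rw [map_mul, map_star, Matrix.star_eq_conjTranspose]
    exact weightedTrace_conjTranspose_mul_self_nonneg hA (π y)

theorem weightedTraceComp_apply [DecidableEq n] {B : Type*} [CStarAlgebra B] [PartialOrder B]
    [StarOrderedRing B] (hA : A.PosSemidef) (π : B →⋆ₐ[ℂ] Matrix n n R) (x : B) :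
    weightedTraceComp hA π x = weightedTrace A (π x) := rfl

end StarOrderedRing

end WeightedTrace

/-- The inclusion of the coefficients of a matrix algebra as scalar matrices, bundled as a star
homomorphism. -/
def scalarStarAlgHom (n : Type*) {S R : Type*} [Fintype n] [DecidableEq n] [CommSemiring S]
    [CommSemiring R] [StarRing R] [Algebra S R] : R →⋆ₐ[S] Matrix n n R where
  __ := Matrix.scalarAlgHom n S
  map_star' _ := (Matrix.diagonal_conjTranspose _).symm

theorem elemental_circleChar_one : StarAlgebra.elemental ℂ (circleChar 1) = ⊤ := by
  refine ContinuousMap.starSubalgebra_topologicalClosure_eq_top_of_separatesPoints _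
    fun z w hzw =>
      ⟨circleChar 1, ⟨circleChar 1, StarAlgebra.self_mem_adjoin_singleton ℂ _, rfl⟩, ?_⟩
  simpa [circleChar, Circle.ext_iff] using hzw

theorem circleChar_one_comp_id_pow (k : ℕ) :
    (circleChar 1).comp (ContinuousMap.id Circle ^ k) = circleChar k := by
  ext z
  simp [circleChar]

theorem leftInverse_of_map_mul {R S : Type*} [MulOneClass R] [MulOneClass S] {σ : S → R}
    {T : R → S} (hT : T 1 = 1) (hσT : ∀ f g, T (σ f * g) = f * T g) : Function.LeftInverse T σ :=
  fun f => by simpa only [mul_one, hT] using hσT f 1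

theorem isCondExp_comp_of_map_mul {Y : Type*} [TopologicalSpace Y] [CompactSpace Y]
    (σ : C(Y, ℂ) →⋆ₐ[ℂ] C(Circle, ℂ)) (T : C(Circle, ℂ) →ₚ[ℂ] C(Y, ℂ)) (hT : T 1 = 1)
    (hσT : ∀ f g, T (σ f * g) = f * T g) : IsCondExp σ.range (fun g => σ (T g)) := by
  refine ⟨⟨?_, ?_⟩, ?_, ?_, ?_, ?_, ?_⟩
  · exact fun f g => by simp only [map_add]
  · exact fun c g => by simp only [map_smul]
  · exact fun g => ⟨T g, rfl⟩
  · rintro _ ⟨f, rfl⟩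
    exact congrArg σ (leftInverse_of_map_mul hT hσT f)
  · exact fun g => CStarAlgebra.nonneg_iff_eq_star_mul_self.mp
      (map_nonneg σ (T.map_nonneg (star_mul_self_nonneg g)))
  · rintro _ ⟨f₁, rfl⟩ _ ⟨f₂, rfl⟩ a
    change σ (T (σ f₁ * a * σ f₂)) = σ f₁ * σ (T a) * σ f₂
    rw [mul_right_comm, ← map_mul σ, hσT, map_mul, map_mul, mul_right_comm]
  · exact fun g =>
      (NonUnitalStarAlgHom.norm_apply_le σ _).trans (norm_apply_le_norm_of_map_one T hT g)

theorem shiftUnitary_mulVec_single {k j : ℕ} (hj : j + 1 < k) :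
    (shiftUnitary k).mulVec (Pi.single ⟨j, by lia⟩ 1) = Pi.single ⟨j + 1, hj⟩ 1 := by
  ext1 i
  have hj_ne : j ≠ k - 1 := by lia
  simp [shiftUnitary, Pi.single_apply, Fin.ext_iff, hj_ne]

theorem shiftUnitary_mulVec_single_last {k : ℕ} (hk : 0 < k) :
    (shiftUnitary k).mulVec (Pi.single ⟨k - 1, by lia⟩ 1) =
      circleChar 1 • Pi.single ⟨0, hk⟩ 1 := by
  have circleChar_one : (⟨fun z => (z : ℂ), continuous_subtype_val⟩ : C(Circle, ℂ)) =
      circleChar 1 := by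
    ext z
    exact congrArg Circle.coeHom (zpow_one z).symm
  ext1 i
  have hi_ne : (i : ℕ) ≠ k - 1 + 1 := by lia
  simp [shiftUnitary, Pi.single_apply, Fin.ext_iff, hi_ne, circleChar_one]

theorem shiftUnitary_pow_mulVec_single_zero {k j : ℕ} (hj : j < k) :
    (shiftUnitary k ^ j).mulVec (Pi.single ⟨0, by lia⟩ 1) = Pi.single ⟨j, hj⟩ 1 := by
  induction j with
  | zero => rw [pow_zero, Matrix.one_mulVec]
  | succ j ih =>
    rw [pow_succ', ← Matrix.mulVec_mulVec, ih (by lia), shiftUnitary_mulVec_single hj]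

theorem shiftUnitary_pow_self (k : ℕ) :
    shiftUnitary k ^ k = Matrix.scalar (Fin k) (circleChar 1) := by
  -- The first basis vector is cyclic for `U = shiftUnitary k`, so `U ^ k` is determined by its
  -- value there.
  refine Matrix.ext_of_mulVec_single fun j => ?_
  have hk : 0 < k := j.pos
  have pow_mulVec_zero : (shiftUnitary k ^ k).mulVec (Pi.single ⟨0, hk⟩ 1) =
      circleChar 1 • Pi.single ⟨0, hk⟩ 1 := by
    rw [← mul_pow_sub_one hk.ne', ← Matrix.mulVec_mulVec,
      shiftUnitary_pow_mulVec_single_zero (Nat.sub_one_lt_of_lt hk),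
      shiftUnitary_mulVec_single_last hk]
  calc (shiftUnitary k ^ k).mulVec (Pi.single j 1)
    _ = (shiftUnitary k ^ (j : ℕ)).mulVec
          ((shiftUnitary k ^ k).mulVec (Pi.single ⟨0, hk⟩ 1)) := by
        rw [← shiftUnitary_pow_mulVec_single_zero j.isLt, Matrix.mulVec_mulVec,
          Matrix.mulVec_mulVec, pow_mul_comm]
    _ = circleChar 1 • Pi.single j 1 := by
        rw [pow_mulVec_zero, Matrix.mulVec_smul, shiftUnitary_pow_mulVec_single_zero j.isLt]
    _ = (Matrix.scalar (Fin k) (circleChar 1)).mulVec (Pi.single j 1) := by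
        rw [Matrix.scalar_apply, Matrix.diagonal_const_mulVec]

theorem trace_conditional_expectation_general {n : Type*} [Fintype n] [DecidableEq n]
    {A : Matrix n n ℂ} (hA : A.PosSemidef) (htrA : A.trace = 1) (φ : C(Circle, Circle))
    (π : C(Circle, ℂ) →⋆ₐ[ℂ] Matrix n n C(Circle, ℂ))
    (hπ : π ((circleChar 1).comp φ) = Matrix.scalar n (circleChar 1)) :
    ∃ E : C(Circle, ℂ) → C(Circle, ℂ),
      IsCondExp (StarAlgebra.elemental ℂ ((circleChar 1).comp φ)) E ∧
      ∀ g : C(Circle, ℂ),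
        π (E g) = (∑ i, ∑ j, A i j • π g j i) • (1 : Matrix n n C(Circle, ℂ)) := by
  let σ : C(Circle, ℂ) →⋆ₐ[ℂ] C(Circle, ℂ) := ContinuousMap.compStarAlgHom' ℂ ℂ φ
  have hπσ (f : C(Circle, ℂ)) : π (σ f) = Matrix.scalar n f := by
    have h : π.comp σ = scalarStarAlgHom n :=
      starAlgHom_matrix_ext_of_elemental_eq_top elemental_circleChar_one hπ
    exact DFunLike.congr_fun h f
  let T := weightedTraceComp hA π
  have hT : T 1 = 1 := by
    rw [weightedTraceComp_apply, map_one, weightedTrace_one, htrA, map_one]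
  have hσT (f g : C(Circle, ℂ)) : T (σ f * g) = f * T g := by
    simp only [T, weightedTraceComp_apply, map_mul, hπσ, weightedTrace_scalar_mul]
  have hσ : Function.Injective σ := (leftInverse_of_map_mul hT hσT).injective
  refine ⟨fun g => σ (T g), ?_, fun g => ?_⟩
  · have h := isCondExp_comp_of_map_mul σ T hT hσT
    rwa [range_eq_elemental_of_injective elemental_circleChar_one σ hσ] at h
  · rw [hπσ, weightedTraceComp_apply, weightedTrace_apply, Matrix.smul_one_eq_diagonal,
      Matrix.scalar_apply]

/-- For a positive matrix `A` with `Tr(A) = 1`, the map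
`F_A = π_k⁻¹ ∘ (Tr(A ·) · I) ∘ π_k` is a conditional expectation of `C(𝕋)` onto the
C*-subalgebra `B_k` generated by the powers of `z^k`. -/
theorem trace_conditional_expectation (k : ℕ) (hk : 1 ≤ k)
    (A : Matrix (Fin k) (Fin k) ℂ) (hA : A.PosSemidef) (htrA : A.trace = 1)
    (hU : shiftUnitary k ∈ unitary (Matrix (Fin k) (Fin k) C(Circle, ℂ)))
    (π : C(Circle, ℂ) →⋆ₐ[ℂ] Matrix (Fin k) (Fin k) C(Circle, ℂ))
    (hπinj : Function.Injective π)
    (hπ : ∀ l : ℤ, π (circleChar l) =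
      (((⟨shiftUnitary k, hU⟩ : unitary (Matrix (Fin k) (Fin k) C(Circle, ℂ))) ^ l :
        unitary (Matrix (Fin k) (Fin k) C(Circle, ℂ))) :
        Matrix (Fin k) (Fin k) C(Circle, ℂ))) :
    ∃ E : C(Circle, ℂ) → C(Circle, ℂ),
      IsCondExp (StarAlgebra.elemental ℂ (circleChar (k : ℤ))) E ∧
      ∀ g : C(Circle, ℂ),
        π (E g) = (∑ i : Fin k, ∑ j : Fin k, A i j • (π g) j i) •
          (1 : Matrix (Fin k) (Fin k) C(Circle, ℂ)) := by
  rw [← circleChar_one_comp_id_pow]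
  exact trace_conditional_expectation_general hA htrA _ π <| by
    rw [circleChar_one_comp_id_pow, hπ, zpow_natCast, SubmonoidClass.coe_pow,
      shiftUnitary_pow_self]
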